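/- For every integer t ≥ 4: w_4^{2^{t-1}-2} ∈ I_{2^t-2,4} and w_4^{2^{t-1}-3} ∉ I_{2^t-2,4}; that is, the image of w_4 in F_2[w_2,w_3,w_4]/I_{2^t-2,4} has height exactly 2^{t-1}-3. (This expresses that the height of the Stiefel–Whitney class w̃_4 in H^*(G̃_{2^t-2,4}; F_2) equals 2^{t-1}-3.) -/

import Mathlib

open MvPolynomial

/-- The polynomials `g_r = g_r^{(4)}` in `F_2[w_2,w_3,w_4]` (variables `X 0 = w_2`,
`X 1 = w_3`, `X 2 = w_4`): `g_0 = 1`, `g_r = 0` for `r < 0`, and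
`g_r = w_2·g_{r-2} + w_3·g_{r-3} + w_4·g_{r-4}` for `r ≥ 1`. -/
noncomputable def g4 : ℤ → MvPolynomial (Fin 3) (ZMod 2)
  | r =>
    if r ≤ 0 then (if r = 0 then 1 else 0)
    else X 0 * g4 (r - 2) + X 1 * g4 (r - 3) + X 2 * g4 (r - 4)
  termination_by r => r.toNat
  decreasing_by all_goals omega

/-- The ideal `I_{n,4} = (g_{n-3}, g_{n-2}, g_{n-1}, g_n)` of `F_2[w_2,w_3,w_4]`. -/
noncomputable def I4 (n : ℤ) : Ideal (MvPolynomial (Fin 3) (ZMod 2)) :=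
  Ideal.span {g4 (n - 3), g4 (n - 2), g4 (n - 1), g4 n}

theorem g4_rec (r : ℤ) (hr : r ≠ 0) :
    g4 r = X 0 * g4 (r - 2) + X 1 * g4 (r - 3) + X 2 * g4 (r - 4) := by
  by_cases h : r ≤ 0
  · have hz : ∀ s : ℤ, s < 0 → g4 s = 0 := by
      intro s hs
      rw [g4, if_pos hs.le, if_neg hs.ne]
    rw [hz r (by omega), hz (r-2) (by omega), hz (r-3) (by omega), hz (r-4) (by omega)]
    simp
  · conv_lhs => rw [g4, if_neg h]

theorem g4_neg (s : ℤ) (hs : s < 0) : g4 s = 0 := by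
  rw [g4, if_pos hs.le, if_neg hs.ne]

theorem g4_zero : g4 0 = 1 := by
  rw [g4]; simp

theorem two_zero : (2 : MvPolynomial (Fin 3) (ZMod 2)) = 0 := CharTwo.two_eq_zero

theorem g4_double (k : ℕ) : ∀ m : ℤ, m < k →
    g4 (2 * m) = g4 m ^ 2 + X 0 * g4 (m - 1) ^ 2 + X 2 * g4 (m - 2) ^ 2 ∧
    g4 (2 * m + 1) = X 1 * g4 (m - 1) ^ 2 := by
  induction k with
  | zero =>
    intro m hm
    simp only [Nat.cast_zero] at hm
    rw [g4_neg (2*m) (by omega), g4_neg (2*m+1) (by omega), g4_neg m hm,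
      g4_neg (m-1) (by omega), g4_neg (m-2) (by omega)]
    simp
  | succ k ih =>
    intro m hm
    push_cast at hm
    obtain ⟨e1, o1⟩ := ih (m - 1) (by omega)
    obtain ⟨e2, o2⟩ := ih (m - 2) (by omega)
    rw [show 2 * (m - 1) = 2 * m - 2 by ring, show m - 1 - 1 = m - 2 by ring,
      show m - 1 - 2 = m - 3 by ring] at e1
    rw [show 2 * (m - 1) + 1 = 2 * m - 1 by ring, show m - 1 - 1 = m - 2 by ring] at o1
    rw [show 2 * (m - 2) = 2 * m - 4 by ring, show m - 2 - 1 = m - 3 by ring,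
      show m - 2 - 2 = m - 4 by ring] at e2
    rw [show 2 * (m - 2) + 1 = 2 * m - 3 by ring, show m - 2 - 1 = m - 3 by ring] at o2
    have h2 := two_zero
    constructor
    · by_cases h0 : m = 0
      · subst h0
        simp [g4_zero, g4_neg]
      · rw [g4_rec (2 * m) (by omega), e1, o2, e2, g4_rec m h0]
        grind
    · rw [g4_rec (2 * m + 1) (by omega), show 2 * m + 1 - 2 = 2 * m - 1 by ring,
        show 2 * m + 1 - 3 = 2 * m - 2 by ring, show 2 * m + 1 - 4 = 2 * m - 3 by ring,
        e1, o1, o2]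
      grind

theorem g4_even (m : ℤ) :
    g4 (2 * m) = g4 m ^ 2 + X 0 * g4 (m - 1) ^ 2 + X 2 * g4 (m - 2) ^ 2 :=
  (g4_double (m.toNat + 1) m (by omega)).1

theorem g4_odd (m : ℤ) : g4 (2 * m + 1) = X 1 * g4 (m - 1) ^ 2 :=
  (g4_double (m.toNat + 1) m (by omega)).2

theorem alg_step {R : Type*} [CommRing R] (h2 : (2 : R) = 0)
    (u v w A B C D E c d P Q S M : R)
    (hC : C = v * c) (hD : D = v * d) (hw : w ^ 2 * D ^ 2 = v ^ 2 * A ^ 2 + C ^ 2)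
    (hB : B = u * A + v * D + w * E)
    (hM : M = v * P * D + (A + v * Q) * A + (E + v * S) * B)
    (A' B' D' E' : R) (hA' : A' = B ^ 2 + w * A ^ 2) (hB' : B' = C ^ 2 + u * B ^ 2)
    (hD' : D' = v * A ^ 2) (hE' : E' = u * A ^ 2 + w * D ^ 2) :
    ∃ P' Q' S' : R, w ^ 2 * M ^ 2 = v * P' * D' + (A' + v * Q') * A' + (E' + v * S') * B' := by
  have hsq : w ^ 2 * M ^ 2 =
      v ^ 2 * P ^ 2 * (w ^ 2 * D ^ 2) + w ^ 2 * A ^ 4 + w ^ 2 * v ^ 2 * Q ^ 2 * A ^ 2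
      + (w * E) ^ 2 * B ^ 2 + w ^ 2 * v ^ 2 * S ^ 2 * B ^ 2 := by
    have : M ^ 2 = (v * P * D) ^ 2 + A ^ 4 + v ^ 2 * Q ^ 2 * A ^ 2
        + E ^ 2 * B ^ 2 + v ^ 2 * S ^ 2 * B ^ 2 := by
      rw [hM]
      linear_combination (v * P * D * A * A + v * P * D * v * Q * A + v * P * D * E * B
        + v * P * D * v * S * B + A * A * v * Q * A + A * A * E * B + A * A * v * S * B
        + v * Q * A * E * B + v * Q * A * v * S * B + E * B * v * S * B) * h2
    rw [this]; ring
  have hvb : v * B ^ 2 = v * A' + w * D' := by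
    rw [hA', hD']; linear_combination (-v * w * A ^ 2) * h2
  have hwd : w ^ 2 * D ^ 2 = v * D' + B' + u * B ^ 2 := by
    rw [hw, hB', hD']; linear_combination (-u * B ^ 2) * h2
  have hwe : (w * E) ^ 2 = B ^ 2 + u ^ 2 * A ^ 2 + v ^ 2 * D ^ 2 := by
    have : w * E = B + u * A + v * D := by
      rw [hB]; linear_combination (-u * A - v * D) * h2
    rw [this]
    linear_combination (B * u * A + B * v * D + u * A * v * D) * h2
  have key : w ^ 2 * A ^ 4 + (w * E) ^ 2 * B ^ 2 = A' ^ 2 + E' * B'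
      + v * D ^ 2 * (v * A' + w * D') + u * v * c ^ 2 * D' + w * v ^ 2 * d ^ 2 * B' := by
    rw [← hvb, hwe, hA', hE', hB', hD', hD, hC]
    clear hsq hwd hwe hvb hA' hB' hC hD hw hB hM hD' hE'
    grind
  refine ⟨v ^ 2 * P ^ 2 + P ^ 2 * u * w + w ^ 2 * Q ^ 2 + S ^ 2 * w ^ 3 + D ^ 2 * w + u * c ^ 2,
    v * P ^ 2 * u + S ^ 2 * w ^ 2 * v + D ^ 2 * v, v * P ^ 2 + w * v * d ^ 2, ?_⟩
  have hq : v ^ 2 * A ^ 2 = v * D' := by rw [hD']; ring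
  rw [hsq, hwd]
  linear_combination key + (v * P ^ 2 * u + w ^ 2 * v * S ^ 2) * hvb + w ^ 2 * Q ^ 2 * hq

theorem main_ind (s : ℕ) : let q : ℤ := 2 ^ (s + 2)
    g4 (q - 3) = 0 ∧ (∃ c, g4 (q - 1) = X 1 * c) ∧ (∃ d, g4 (q - 5) = X 1 * d) ∧
    X 2 ^ 2 * g4 (q - 5) ^ 2 = X 1 ^ 2 * g4 (q - 4) ^ 2 + g4 (q - 1) ^ 2 ∧
    ∃ P Q S, X 2 ^ (2 ^ (s + 1) - 2) = X 1 * P * g4 (q - 5) + (g4 (q - 4) + X 1 * Q) * g4 (q - 4)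
      + (g4 (q - 6) + X 1 * S) * g4 (q - 2) := by
  induction s with
  | zero =>
    have h1 : g4 1 = 0 := by rw [g4_rec 1 (by norm_num)]; simp [g4_neg]
    have h3 : g4 3 = X 1 := by
      rw [g4_rec 3 (by norm_num)]; norm_num; simp [g4_neg, h1, g4_zero]
    norm_num
    refine ⟨h1, ⟨1, by simp [h3]⟩, ⟨0, by simp [g4_neg]⟩, ?_, 0, 0, 0, ?_⟩
    · rw [g4_neg (-1) (by norm_num), g4_zero, h3]
      linear_combination (-X 1 ^ 2) * two_zero
    · simp [g4_zero, g4_neg]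
  | succ s ih =>
    intro q'
    obtain ⟨h3, ⟨c, hc⟩, ⟨d, hd⟩, hw, P, Q, S, hM⟩ := ih
    have hq' : q' = 2 * 2 ^ (s + 2) := by simp only [q']; ring
    have hq4 : (4 : ℤ) ≤ 2 ^ (s + 2) := by
      have : (1 : ℤ) ≤ 2 ^ s := one_le_pow₀ (by norm_num)
      rw [pow_add]; omega
    generalize (2 : ℤ) ^ (s + 2) = q at *
    clear_value q'; subst hq'
    have hA' : g4 (2 * q - 4) = g4 (q - 2) ^ 2 + X 2 * g4 (q - 4) ^ 2 := by
      rw [show 2 * q - 4 = 2 * (q - 2) by ring, g4_even, show q - 2 - 1 = q - 3 by ring,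
        show q - 2 - 2 = q - 4 by ring, h3]; ring
    have hB' : g4 (2 * q - 2) = g4 (q - 1) ^ 2 + X 0 * g4 (q - 2) ^ 2 := by
      rw [show 2 * q - 2 = 2 * (q - 1) by ring, g4_even, show q - 1 - 1 = q - 2 by ring,
        show q - 1 - 2 = q - 3 by ring, h3]; ring
    have hE' : g4 (2 * q - 6) = X 0 * g4 (q - 4) ^ 2 + X 2 * g4 (q - 5) ^ 2 := by
      rw [show 2 * q - 6 = 2 * (q - 3) by ring, g4_even, show q - 3 - 1 = q - 4 by ring,
        show q - 3 - 2 = q - 5 by ring, h3]; ring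
    have hC' : g4 (2 * q - 1) = X 1 * g4 (q - 2) ^ 2 := by
      rw [show 2 * q - 1 = 2 * (q - 1) + 1 by ring, g4_odd, show q - 1 - 1 = q - 2 by ring]
    have hD' : g4 (2 * q - 5) = X 1 * g4 (q - 4) ^ 2 := by
      rw [show 2 * q - 5 = 2 * (q - 3) + 1 by ring, g4_odd, show q - 3 - 1 = q - 4 by ring]
    have hB : g4 (q - 2) = X 0 * g4 (q - 4) + X 1 * g4 (q - 5) + X 2 * g4 (q - 6) := by
      rw [g4_rec (q - 2) (by omega)]
      ring_nf
    refine ⟨?_, ⟨_, hC'⟩, ⟨_, hD'⟩, ?_, ?_⟩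
    · rw [show 2 * q - 3 = 2 * (q - 2) + 1 by ring, g4_odd, show q - 2 - 1 = q - 3 by ring, h3]
      ring
    · rw [hD', hA', hC']
      linear_combination (-X 1 ^ 2 * g4 (q - 2) ^ 4
        - X 1 ^ 2 * X 2 * g4 (q - 2) ^ 2 * g4 (q - 4) ^ 2) * two_zero
    · have := alg_step two_zero (X 0) (X 1) (X 2) _ _ _ _ _ c d P Q S _ hc hd hw hB hM
        _ _ _ _ hA' hB' hD' hE'
      have e : (2 : ℕ) ^ (s + 1 + 1) - 2 = 2 + (2 ^ (s + 1) - 2) * 2 := by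
        have : 1 ≤ 2 ^ s := Nat.one_le_two_pow
        simp only [pow_succ]; omega
      rw [e, pow_add, pow_mul]
      exact this

/-- Substitution `w_2 ↦ x + y`, `w_3 ↦ 0`, `w_4 ↦ x y`. -/
noncomputable def phi : MvPolynomial (Fin 3) (ZMod 2) →ₐ[ZMod 2] MvPolynomial (Fin 2) (ZMod 2) :=
  aeval ![X 0 + X 1, 0, X 0 * X 1]

theorem phi_g (k : ℕ) : ∀ m : ℕ, m < k →
    (X 0 + X 1) * phi (g4 (2 * m)) = X 0 ^ (m + 1) + X 1 ^ (m + 1) := by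
  have h2 : (2 : MvPolynomial (Fin 2) (ZMod 2)) = 0 := CharTwo.two_eq_zero
  induction k with
  | zero => intro m hm; omega
  | succ k ih =>
    intro m hm
    match m with
    | 0 => simp [g4_zero]
    | 1 =>
      rw [g4_rec _ (by norm_num)]
      norm_num
      simp [g4_zero, g4_neg, phi]
      linear_combination (X 0 * X 1) * h2
    | m + 2 =>
      have i1 := ih (m + 1) (by omega)
      have i2 := ih m (by omega)
      rw [g4_rec _ (by push_cast; omega)]
      have e1 : 2 * ((m + 2 : ℕ) : ℤ) - 2 = 2 * ((m + 1 : ℕ) : ℤ) := by push_cast; ring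
      have e2 : 2 * ((m + 2 : ℕ) : ℤ) - 4 = 2 * (m : ℤ) := by push_cast; ring
      rw [e1, e2]
      simp only [map_add, map_mul]
      have p0 : phi (X 0) = X 0 + X 1 := by simp [phi]
      have p1 : phi (X 1) = 0 := by simp [phi]
      have p2 : phi (X 2) = X 0 * X 1 := by simp [phi]
      rw [p0, p1, p2]
      linear_combination (X 0 + X 1) * i1 + X 0 * X 1 * i2 + (X 0 ^ (m+2) * X 1 + X 0 * X 1 ^ (m+2)) * h2

theorem phi_odd (m : ℤ) : phi (g4 (2 * m + 1)) = 0 := by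
  rw [g4_odd]; simp [phi]

theorem not_mem (n : ℕ) (hn : 2 ≤ n) :
    (X 2 : MvPolynomial (Fin 3) (ZMod 2)) ^ (n - 2) ∉ I4 (2 * n) := by
  intro h
  let J : Ideal (MvPolynomial (Fin 2) (ZMod 2)) :=
    Ideal.span ((fun s => monomial s (1 : ZMod 2)) '' {Finsupp.single 0 n, Finsupp.single 1 n})
  have hx : ∀ i : Fin 2, ∀ j, n ≤ j → (X i : MvPolynomial (Fin 2) (ZMod 2)) ^ j ∈ J := by
    intro i j hj
    refine J.mem_of_dvd (pow_dvd_pow _ hj) (Ideal.subset_span ?_)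
    rw [X_pow_eq_monomial]
    refine ⟨_, ?_, rfl⟩
    fin_cases i <;> simp
  have hI : ∀ f ∈ I4 (2 * n), (X 0 + X 1) * phi f ∈ J := by
    intro f hf
    unfold I4 at hf
    induction hf using Submodule.span_induction with
    | zero => simp
    | add x y _ _ hx hy => rw [map_add, mul_add]; exact J.add_mem hx hy
    | smul a x _ hx =>
      rw [smul_eq_mul, map_mul, mul_left_comm]; exact J.mul_mem_left _ hx
    | mem x hxm =>
      rcases hxm with rfl | rfl | rfl | rfl
      · rw [show (2 * n - 3 : ℤ) = 2 * (n - 2) + 1 by ring, phi_odd]; simp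
      · rw [show (2 * n - 2 : ℤ) = 2 * ((n - 1 : ℕ) : ℤ) by omega, phi_g _ _ (Nat.lt_succ_self _)]
        exact J.add_mem (hx _ _ (by omega)) (hx _ _ (by omega))
      · rw [show (2 * n - 1 : ℤ) = 2 * (n - 1) + 1 by ring, phi_odd]; simp
      · rw [phi_g _ _ (Nat.lt_succ_self _)]
        exact J.add_mem (hx _ _ (by omega)) (hx _ _ (by omega))
  have h1 := hI _ h
  have h3 : (X 0 + X 1) * phi (X 2 ^ (n - 2)) =
      monomial (Finsupp.single 0 (n - 1) + Finsupp.single 1 (n - 2)) (1 : ZMod 2)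
      + monomial (Finsupp.single 0 (n - 2) + Finsupp.single 1 (n - 1)) (1 : ZMod 2) := by
    have p2 : phi (X 2) = X 0 * X 1 := by simp [phi]
    have hm : ∀ a b, monomial (Finsupp.single (0 : Fin 2) a + Finsupp.single 1 b) (1 : ZMod 2)
        = X 0 ^ a * X 1 ^ b := by
      intro a b
      rw [X_pow_eq_monomial, X_pow_eq_monomial, monomial_mul, one_mul]
    rw [map_pow, p2, hm, hm, show n - 1 = n - 2 + 1 by omega]
    ring
  rw [h3] at h1
  have h4 := (mem_ideal_span_monomial_image.mp h1) (Finsupp.single 0 (n - 1) + Finsupp.single 1 (n - 2)) (by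
    rw [mem_support_iff, coeff_add, coeff_monomial, coeff_monomial, if_pos rfl, if_neg]
    · simp
    · intro hh
      have := DFunLike.congr_fun hh 0
      simp at this
      omega)
  obtain ⟨s, hs, hle⟩ := h4
  rcases hs with rfl | rfl
  · have := hle 0
    simp at this
    omega
  · have := hle 1
    simp at this
    omega

theorem stmt12 (t : ℕ) (ht : 4 ≤ t) :
    (X 2 : MvPolynomial (Fin 3) (ZMod 2)) ^ (2 ^ (t - 1) - 2) ∈ I4 (2 ^ t - 2) ∧
      (X 2 : MvPolynomial (Fin 3) (ZMod 2)) ^ (2 ^ (t - 1) - 3) ∉ I4 (2 ^ t - 2) := by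
  obtain ⟨s, rfl⟩ : ∃ s, t = s + 2 := ⟨t - 2, by omega⟩
  rw [show s + 2 - 1 = s + 1 by omega]
  constructor
  · obtain ⟨-, -, -, -, P, Q, S, h⟩ := main_ind s
    rw [h]
    have hg : ∀ x ∈ ({g4 (2 ^ (s + 2) - 2 - 3), g4 (2 ^ (s + 2) - 2 - 2), g4 (2 ^ (s + 2) - 2 - 1),
        g4 (2 ^ (s + 2) - 2)} : Set (MvPolynomial (Fin 3) (ZMod 2))), x ∈ I4 (2 ^ (s + 2) - 2) :=
      fun x hx => Ideal.subset_span hx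
    refine Ideal.add_mem _ (Ideal.add_mem _ ?_ ?_) ?_ <;> refine Ideal.mul_mem_left _ _ (hg _ ?_)
    · left; congr 1; ring
    · right; left; congr 1; ring
    · right; right; right; rfl
  · have h4 : 4 ≤ 2 ^ s := by
      calc 4 = 2 ^ 2 := rfl
        _ ≤ 2 ^ s := Nat.pow_le_pow_right (by norm_num) (by omega)
    have := not_mem (2 ^ (s + 1) - 1) (by rw [pow_succ]; omega)
    rw [show 2 ^ (s + 1) - 1 - 2 = 2 ^ (s + 1) - 3 by omega] at this
    have e : (2 * ((2 ^ (s + 1) - 1 : ℕ) : ℤ)) = 2 ^ (s + 2) - 2 := by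
      rw [Nat.cast_sub Nat.one_le_two_pow]; push_cast; ring
    rwa [e] at this
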